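/- The sequence b_d := 1 / (1 + sup{ Q(x,y) : x ∈ ℝ^{⌈d/2⌉}_{>0}, y ∈ ℝ^{⌊d/2⌋}_{>0} }) satisfies the asymptotics b_d ~ 2/(c*·d) as d → ∞, i.e. lim_{d→∞} d·b_d = 2/c* = 54/(7√7 − 17), where c* := (7√7 − 17)/27. -/

import Mathlib

/-!
Write `s = √7` and `c = (7 s - 17) / 27`. The supremum `S_d` defining `bSeq d` satisfies
`S_d / d → c / 2`, and `d * bSeq d = 1 / (1 / d + S_d / d)`, so the limit is `2 / c`.

*Upper bound.* If the numerator of `Q x y` is positive, then (up to exchanging `x` and `y`)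
`A = M₁(x) > a = M₁(y)` and `b = M₂(y) > B = M₂(x)`. Cauchy-Schwarz gives `M₃(x) ≥ B² / A`,
`M₃(y) ≥ b² / a` and `n ≥ A² / B`. With `u = a / A` and `v = b / B`, the bound `Q x y ≤ c n`
follows from `u (1 - u) (v - 1) ≤ c (u + v²)` for `0 < u < 1`. As a quadratic in `v` this is a
discriminant condition on `u`: a cubic with the double root `u₀ = (2 s - 1) / 9` and the third root
`2 - 2 u₀ > 1` (`two_var_bound`, `homogeneous_bound`, `Q_le`).

*Lower bound.* Equality forces `x` constant and `y` supported on a fraction of its coordinates.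
Take `x = 1` and let `y` have a proportion `κ = (16 - 5 s) / 27` of entries equal to `2 + s`, the
others being `1 / d`. Then `Q x y / d → c / 2` (`tendsto_testQ`).
-/

open Finset Filter

/-- The quotient `Q(x,y)` of differences of power sums, for vectors of possibly
different lengths. -/
noncomputable def Q {n m : ℕ} (x : Fin n → ℝ) (y : Fin m → ℝ) : ℝ :=
  ((∑ i, x i - ∑ i, y i) * (∑ i, (y i)^2 - ∑ i, (x i)^2)) /
    (∑ i, (x i)^3 + ∑ i, (y i)^3)

/-- The threshold `b_d`. -/
noncomputable def bSeq (d : ℕ) : ℝ :=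
  1 / (1 + sSup {q : ℝ | ∃ (x : Fin ((d + 1) / 2) → ℝ) (y : Fin (d / 2) → ℝ),
    (∀ i, 0 < x i) ∧ (∀ i, 0 < y i) ∧ q = Q x y})

/-! ### Upper bound -/

lemma sqrt_seven_bounds : 2.6457 < Real.sqrt 7 ∧ Real.sqrt 7 < 2.6458 := by
  constructor
  · apply Real.lt_sqrt_of_sq_lt; norm_num
  · rw [Real.sqrt_lt' (by norm_num)]; norm_num

/-- The dehomogenised inequality; equality holds at `u = (2 √7 - 1) / 9`, `v = (4 + √7) / 3`. -/
lemma two_var_bound {u v : ℝ} (hu : 0 < u) (hu1 : u < 1) :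
    u * (1 - u) * (v - 1) ≤ (7 * Real.sqrt 7 - 17) / 27 * (u + v ^ 2) := by
  obtain ⟨h1, h2⟩ := sqrt_seven_bounds
  have hs : Real.sqrt 7 ^ 2 = 7 := Real.sq_sqrt (by norm_num)
  set s := Real.sqrt 7
  set c := (7 * s - 17) / 27 with hc
  have hcpos : 0 < c := by rw [hc]; linarith
  -- The discriminant in `v`, factored through its double root.
  have hdisc : 4 * c * (c + 1 - u) - u * (1 - u) ^ 2
      = (u - (2 * s - 1) / 9) ^ 2 * ((20 - 4 * s) / 9 - u) := by
    rw [hc]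
    linear_combination ((100 + 16 * s) / 729 - 4 / 27 * u) * hs
  have hnn : 0 ≤ u * (4 * c * (c + 1 - u) - u * (1 - u) ^ 2) := by
    rw [hdisc]
    have : 0 ≤ (20 - 4 * s) / 9 - u := by linarith
    positivity
  have hsq := sq_nonneg (2 * c * v - u * (1 - u))
  have : 0 ≤ 4 * c * (c * (u + v ^ 2) - u * (1 - u) * (v - 1)) := by
    linear_combination hnn + hsq
  have := nonneg_of_mul_nonneg_right this (by positivity)
  linarith

lemma homogeneous_bound {A a B b C D N : ℝ} (ha : 0 < a) (hB : 0 < B)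
    (hC : B ^ 2 ≤ A * C) (hD : b ^ 2 ≤ a * D) (hN : A ^ 2 ≤ N * B) (hAa : a < A) :
    (A - a) * (b - B) ≤ (7 * Real.sqrt 7 - 17) / 27 * N * (C + D) := by
  have hA : 0 < A := ha.trans hAa
  have hcpos : 0 < (7 * Real.sqrt 7 - 17) / 27 := by
    linarith [sqrt_seven_bounds.1]
  have key := two_var_bound (v := b / B) (div_pos ha hA) ((div_lt_one hA).2 hAa)
  set c := (7 * Real.sqrt 7 - 17) / 27
  have hC' : B ^ 2 / A ≤ C := by rw [div_le_iff₀ hA]; linarith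
  have hD' : b ^ 2 / a ≤ D := by rw [div_le_iff₀ ha]; linarith
  have hN' : A ^ 2 / B ≤ N := by rw [div_le_iff₀ hB]; linarith
  have hN0 : 0 ≤ N := le_trans (by positivity) hN'
  calc (A - a) * (b - B)
      = A ^ 2 * B / a * (a / A * (1 - a / A) * (b / B - 1)) := by field_simp
    _ ≤ A ^ 2 * B / a * (c * (a / A + (b / B) ^ 2)) := by gcongr
    _ = c * (A ^ 2 / B) * (B ^ 2 / A + b ^ 2 / a) := by field_simp
    _ ≤ c * N * (C + D) := by gcongr

lemma sum_sq_sq_le {n : ℕ} {x : Fin n → ℝ} (hx : ∀ i, 0 < x i) :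
    (∑ i, x i ^ 2) ^ 2 ≤ (∑ i, x i) * ∑ i, x i ^ 3 :=
  Finset.sum_sq_le_sum_mul_sum_of_sq_le_mul _ (fun i _ => (hx i).le)
    (fun i _ => (pow_pos (hx i) 3).le) (fun i _ => by apply le_of_eq; ring)

lemma Q_le {n m : ℕ} (hm : 0 < m) (hmn : m ≤ n) {x : Fin n → ℝ} {y : Fin m → ℝ}
    (hx : ∀ i, 0 < x i) (hy : ∀ i, 0 < y i) :
    Q x y ≤ (7 * Real.sqrt 7 - 17) / 27 * n := by
  have hn : 0 < n := hm.trans_le hmn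
  have : Nonempty (Fin n) := ⟨⟨0, hn⟩⟩
  have : Nonempty (Fin m) := ⟨⟨0, hm⟩⟩
  have hcpos : 0 < (7 * Real.sqrt 7 - 17) / 27 := by
    linarith [sqrt_seven_bounds.1]
  have pos : ∀ {k : ℕ} [Nonempty (Fin k)] {z : Fin k → ℝ}, (∀ i, 0 < z i) → ∀ p : ℕ,
      0 < ∑ i, z i ^ p := fun {k} _ {z} hz p =>
    Finset.sum_pos (fun i _ => pow_pos (hz i) p) Finset.univ_nonempty
  have hX1 := pos hx 1
  have hY1 := pos hy 1
  simp only [pow_one] at hX1 hY1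
  have hX2 := pos hx 2
  have hY2 := pos hy 2
  have hX3 := pos hx 3
  have hY3 := pos hy 3
  have hXC := sum_sq_sq_le hx
  have hYC := sum_sq_sq_le hy
  have hXN : (∑ i, x i) ^ 2 ≤ (n : ℝ) * ∑ i, x i ^ 2 := by
    simpa using sq_sum_le_card_mul_sum_sq (s := Finset.univ) (f := x)
  have hYN : (∑ i, y i) ^ 2 ≤ (n : ℝ) * ∑ i, y i ^ 2 := by
    have h : (∑ i, y i) ^ 2 ≤ (m : ℝ) * ∑ i, y i ^ 2 := by
      simpa using sq_sum_le_card_mul_sum_sq (s := Finset.univ) (f := y)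
    refine h.trans ?_
    gcongr
  unfold Q
  rw [div_le_iff₀ (by positivity)]
  set A := ∑ i, x i
  set a := ∑ i, y i
  set B := ∑ i, x i ^ 2
  set b := ∑ i, y i ^ 2
  have hR : 0 ≤ (7 * Real.sqrt 7 - 17) / 27 * n * (∑ i, x i ^ 3 + ∑ i, y i ^ 3) := by positivity
  rcases le_or_gt ((A - a) * (b - B)) 0 with h | h
  · exact h.trans hR
  · rcases pos_and_pos_or_neg_and_neg_of_mul_pos h with ⟨h1, h2⟩ | ⟨h1, h2⟩
    · exact homogeneous_bound hY1 hX2 hXC hYC hXN (by linarith)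
    · have := homogeneous_bound hX1 hY2 hYC hXC hYN (by linarith)
      linarith

/-! ### Lower bound -/

lemma sum_fin_ite {m k : ℕ} (hk : k ≤ m) (p q : ℝ) :
    ∑ i : Fin m, (if i.val < k then p else q) = k * p + (m - k) * q := by
  rw [Fin.sum_univ_eq_sum_range (fun i => if i < k then p else q) m,
    ← Finset.sum_range_add_sum_Ico _ hk,
    Finset.sum_congr rfl (g := fun _ => p) (fun i hi => by simp [Finset.mem_range.1 hi]),
    Finset.sum_congr (s₁ := Finset.Ico k m) rfl (g := fun _ => q)
      (fun i hi => by simp [(Finset.mem_Ico.1 hi).1])]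
  simp [Nat.cast_sub hk]

/-- Number of large entries of the test vector `y`: about `κ d / 2` with `κ = (16 - 5 √7) / 27`. -/
noncomputable def largeCount (d : ℕ) : ℕ := ⌊(16 - 5 * Real.sqrt 7) / 27 * ((d / 2 : ℕ) : ℝ)⌋₊

/-- The value of `Q` at the test pair: `x` constant equal to `1`, and `y` with `largeCount d`
entries `2 + √7` and all other entries `1 / d`. -/
noncomputable def testQ (d : ℕ) : ℝ :=
  Q (fun _ : Fin ((d + 1) / 2) => (1 : ℝ))
    (fun i : Fin (d / 2) => if i.val < largeCount d then 2 + Real.sqrt 7 else (d : ℝ)⁻¹)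

lemma largeCount_le (d : ℕ) : largeCount d ≤ d / 2 := by
  obtain ⟨h1, h2⟩ := sqrt_seven_bounds
  apply Nat.floor_le_of_le
  have : (0 : ℝ) ≤ ((d / 2 : ℕ) : ℝ) := by positivity
  nlinarith

lemma testQ_eq (d : ℕ) :
    testQ d = ((((d + 1) / 2 : ℕ) : ℝ)
        - (largeCount d * (2 + Real.sqrt 7) + (((d / 2 : ℕ) : ℝ) - largeCount d) * (d : ℝ)⁻¹))
      * ((largeCount d * (2 + Real.sqrt 7) ^ 2
          + (((d / 2 : ℕ) : ℝ) - largeCount d) * (d : ℝ)⁻¹ ^ 2) - (((d + 1) / 2 : ℕ) : ℝ))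
      / ((((d + 1) / 2 : ℕ) : ℝ) + (largeCount d * (2 + Real.sqrt 7) ^ 3
          + (((d / 2 : ℕ) : ℝ) - largeCount d) * (d : ℝ)⁻¹ ^ 3)) := by
  unfold testQ Q
  simp only [ite_pow, sum_fin_ite (largeCount_le d)]
  simp

lemma tendsto_half : Tendsto (fun d : ℕ => ((d / 2 : ℕ) : ℝ) / d) atTop (nhds (1 / 2)) := by
  have h := (tendsto_nat_floor_mul_div_atTop (R := ℝ) (a := 1 / 2) (by norm_num)).comp
    (tendsto_natCast_atTop_atTop (R := ℝ))
  refine h.congr fun d => ?_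
  have : ⌊(1 / 2 : ℝ) * d⌋₊ = d / 2 := by
    rw [← Nat.floor_div_eq_div (K := ℝ)]; congr 1; push_cast; ring
  simp only [Function.comp, this]

lemma tendsto_half_up :
    Tendsto (fun d : ℕ => (((d + 1) / 2 : ℕ) : ℝ) / d) atTop (nhds (1 / 2)) := by
  have h : Tendsto (fun d : ℕ => 1 - ((d / 2 : ℕ) : ℝ) / d) atTop (nhds (1 - 1 / 2)) :=
    tendsto_const_nhds.sub tendsto_half
  rw [show (1 : ℝ) - 1 / 2 = 1 / 2 by norm_num] at h
  refine h.congr' ?_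
  filter_upwards [eventually_gt_atTop 0] with d hd
  have hd0 : (d : ℝ) ≠ 0 := by positivity
  have : (((d + 1) / 2 : ℕ) : ℝ) + ((d / 2 : ℕ) : ℝ) = d := by
    exact_mod_cast (by omega : (d + 1) / 2 + d / 2 = d)
  field_simp
  linarith

lemma tendsto_largeCount : Tendsto (fun d : ℕ => (largeCount d : ℝ) / d) atTop
    (nhds ((16 - 5 * Real.sqrt 7) / 27 * (1 / 2))) := by
  obtain ⟨h1, h2⟩ := sqrt_seven_bounds
  have hhalf : Tendsto (fun d : ℕ => ((d / 2 : ℕ) : ℝ)) atTop atTop :=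
    tendsto_natCast_atTop_atTop.comp (Nat.tendsto_div_const_atTop (by norm_num))
  have h := ((tendsto_nat_floor_mul_div_atTop (R := ℝ) (a := (16 - 5 * Real.sqrt 7) / 27)
    (by linarith)).comp hhalf).mul tendsto_half
  refine h.congr' ?_
  filter_upwards [eventually_ge_atTop 2] with d hd
  have hm : ((d / 2 : ℕ) : ℝ) ≠ 0 := by
    have : 0 < d / 2 := by omega
    positivity
  simp only [Function.comp, largeCount]
  field_simp

lemma tendsto_testQ : Tendsto (fun d : ℕ => testQ d / d) atTop
    (nhds ((7 * Real.sqrt 7 - 17) / 54)) := by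
  obtain ⟨h1, h2⟩ := sqrt_seven_bounds
  have hs : Real.sqrt 7 ^ 2 = 7 := Real.sq_sqrt (by norm_num)
  have hinv : Tendsto (fun d : ℕ => (d : ℝ)⁻¹) atTop (nhds 0) :=
    tendsto_inv_atTop_nhds_zero_nat
  have hn := tendsto_half_up
  have hm := tendsto_half
  have hk := tendsto_largeCount
  have hpow : ∀ p : ℕ, Tendsto (fun d : ℕ => (largeCount d : ℝ) / d * (2 + Real.sqrt 7) ^ p
      + (((d / 2 : ℕ) : ℝ) / d - (largeCount d : ℝ) / d) * (d : ℝ)⁻¹ ^ p) atTop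
      (nhds ((16 - 5 * Real.sqrt 7) / 27 * (1 / 2) * (2 + Real.sqrt 7) ^ p
        + (1 / 2 - (16 - 5 * Real.sqrt 7) / 27 * (1 / 2)) * 0 ^ p)) := fun p =>
    (hk.mul_const _).add ((hm.sub hk).mul (hinv.pow p))
  have hden : (1 / 2 + ((16 - 5 * Real.sqrt 7) / 27 * (1 / 2) * (2 + Real.sqrt 7) ^ 3
        + (1 / 2 - (16 - 5 * Real.sqrt 7) / 27 * (1 / 2)) * 0 ^ 3)) ≠ 0 := by
    have : 0 < 16 - 5 * Real.sqrt 7 := by linarith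
    norm_num
    positivity
  have h := ((hn.sub (hpow 1)).mul ((hpow 2).sub hn)).div (hn.add (hpow 3)) hden
  have hlim : (1 / 2 - ((16 - 5 * Real.sqrt 7) / 27 * (1 / 2) * (2 + Real.sqrt 7) ^ 1
        + (1 / 2 - (16 - 5 * Real.sqrt 7) / 27 * (1 / 2)) * 0 ^ 1))
      * ((16 - 5 * Real.sqrt 7) / 27 * (1 / 2) * (2 + Real.sqrt 7) ^ 2
        + (1 / 2 - (16 - 5 * Real.sqrt 7) / 27 * (1 / 2)) * 0 ^ 2 - 1 / 2)
      / (1 / 2 + ((16 - 5 * Real.sqrt 7) / 27 * (1 / 2) * (2 + Real.sqrt 7) ^ 3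
        + (1 / 2 - (16 - 5 * Real.sqrt 7) / 27 * (1 / 2)) * 0 ^ 3))
      = (7 * Real.sqrt 7 - 17) / 54 := by
    rw [div_eq_iff hden]
    generalize Real.sqrt 7 = s at hs
    have e1 : (16 - 5 * s) * (2 + s) = 3 * (2 * s - 1) := by linear_combination (-5) * hs
    have e2 : (16 - 5 * s) * (2 + s) ^ 2 = 9 * (4 + s) := by
      linear_combination (2 + s) * e1 + 6 * hs
    have e3 : (16 - 5 * s) * (2 + s) ^ 3 = 9 * (15 + 6 * s) := by
      linear_combination (2 + s) * e2 + 9 * hs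
    have f1 : (16 - 5 * s) / 27 * (1 / 2) * (2 + s) ^ 1 = (2 * s - 1) / 18 := by
      linear_combination e1 / 54
    have f2 : (16 - 5 * s) / 27 * (1 / 2) * (2 + s) ^ 2 = (4 + s) / 6 := by
      linear_combination e2 / 54
    have f3 : (16 - 5 * s) / 27 * (1 / 2) * (2 + s) ^ 3 = (15 + 6 * s) / 6 := by
      linear_combination e3 / 54
    rw [f1, f2, f3]
    linear_combination (-4 / 27) * hs
  rw [hlim] at h
  refine h.congr' ?_
  filter_upwards [eventually_gt_atTop 0] with d hd
  have hd0 : (d : ℝ) ≠ 0 := by positivity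
  rw [testQ_eq]
  simp only [Pi.div_apply]
  -- Numerator and denominator are rescaled by `d⁻²` and `d⁻¹`.
  generalize (((d + 1) / 2 : ℕ) : ℝ) = n
  generalize ((d / 2 : ℕ) : ℝ) = m
  generalize (largeCount d : ℝ) = k
  generalize hδ : (d : ℝ)⁻¹ = δ
  have e : ∀ p : ℕ, k / d * (2 + Real.sqrt 7) ^ p + (m / d - k / d) * δ ^ p
      = (k * (2 + Real.sqrt 7) ^ p + (m - k) * δ ^ p) / d := fun p => by field_simp
  have e1 := e 1
  rw [pow_one, pow_one] at e1
  simp only [pow_one, e1, e 2, e 3]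
  rw [← sub_div, ← sub_div, ← add_div]
  rw [div_mul_div_comm, div_div_div_eq, div_div, mul_comm (d * d : ℝ) _, ← mul_assoc,
    mul_div_mul_right _ _ hd0]

/-! ### Assembly -/

theorem stmt_18 :
    Tendsto (fun d : ℕ => (d : ℝ) * bSeq d) atTop
      (nhds (54 / (7 * Real.sqrt 7 - 17))) := by
  obtain ⟨h1, h2⟩ := sqrt_seven_bounds
  set S : ℕ → ℝ := fun d => sSup {q : ℝ | ∃ (x : Fin ((d + 1) / 2) → ℝ) (y : Fin (d / 2) → ℝ),
    (∀ i, 0 < x i) ∧ (∀ i, 0 < y i) ∧ q = Q x y} with hS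
  have hbound : ∀ d : ℕ, 2 ≤ d → testQ d ≤ S d ∧
      S d ≤ (7 * Real.sqrt 7 - 17) / 27 * (((d + 1) / 2 : ℕ) : ℝ) := by
    intro d hd
    have hmem : testQ d ∈ {q : ℝ | ∃ (x : Fin ((d + 1) / 2) → ℝ) (y : Fin (d / 2) → ℝ),
        (∀ i, 0 < x i) ∧ (∀ i, 0 < y i) ∧ q = Q x y} := by
      refine ⟨_, _, fun _ => one_pos, fun i => ?_, rfl⟩
      have : 0 < d := by omega
      split_ifs <;> positivity
    have hub : ∀ q ∈ {q : ℝ | ∃ (x : Fin ((d + 1) / 2) → ℝ) (y : Fin (d / 2) → ℝ),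
        (∀ i, 0 < x i) ∧ (∀ i, 0 < y i) ∧ q = Q x y},
        q ≤ (7 * Real.sqrt 7 - 17) / 27 * (((d + 1) / 2 : ℕ) : ℝ) := by
      rintro q ⟨x, y, hx, hy, rfl⟩
      exact Q_le (by omega) (by omega) hx hy
    exact ⟨le_csSup ⟨_, hub⟩ hmem, csSup_le ⟨_, hmem⟩ hub⟩
  have hlim : Tendsto (fun d : ℕ => S d / d) atTop (nhds ((7 * Real.sqrt 7 - 17) / 54)) := by
    have hup := tendsto_half_up.const_mul ((7 * Real.sqrt 7 - 17) / 27)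
    rw [show (7 * Real.sqrt 7 - 17) / 27 * (1 / 2) = (7 * Real.sqrt 7 - 17) / 54 by ring] at hup
    refine tendsto_of_tendsto_of_tendsto_of_le_of_le' tendsto_testQ hup ?_ ?_
    · filter_upwards [eventually_ge_atTop 2] with d hd
      have := (hbound d hd).1
      gcongr
    · filter_upwards [eventually_ge_atTop 2] with d hd
      rw [← mul_div_assoc]
      have := (hbound d hd).2
      gcongr
  have hinv : Tendsto (fun d : ℕ => (d : ℝ)⁻¹) atTop (nhds 0) :=
    tendsto_inv_atTop_nhds_zero_nat
  have h := (hinv.add hlim).inv₀ (by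
    have : 0 < (7 * Real.sqrt 7 - 17) / 54 := by linarith
    linarith)
  rw [zero_add, inv_div] at h
  refine h.congr' ?_
  filter_upwards [eventually_gt_atTop 0] with d hd
  have hd0 : (d : ℝ) ≠ 0 := by positivity
  have hb : bSeq d = 1 / (1 + S d) := rfl
  rw [hb, inv_eq_one_div (d : ℝ), ← add_div, inv_div, mul_one_div]
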